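/- arXiv:1802.05897 — 3 statements merged into one kernel-verified Lean document; each statement's English description precedes it below -/
import Mathlib

section
/- (Cassini's like identity) For every even integer n ≥ 2, W_{n-2}·W_{n+2} − W_n² = (A·B·(α² − β²)/(αβ)³)·(α*·β*·β² − β*·α*·α²). -/
noncomputable def w (a b w0 w1 : ℝ) : ℕ → ℝ
  | 0 => w0
  | 1 => w1
  | n + 2 => (if Even (n + 2) then a else b) * w a b w0 w1 (n + 1) + w a b w0 w1 n

/-- The standard basis `e_0 = 1, e_1 = i, e_2 = j, e_3 = k` of the real quaternions. -/
noncomputable def e : ℕ → Quaternion ℝ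
  | 0 => 1
  | 1 => ⟨0, 1, 0, 0⟩
  | 2 => ⟨0, 0, 1, 0⟩
  | _ => ⟨0, 0, 0, 1⟩

/-- The generalized bi-periodic Fibonacci quaternion `W_n = ∑_{l=0}^{3} w_{n+l} e_l`. -/
noncomputable def W (a b w0 w1 : ℝ) (n : ℕ) : Quaternion ℝ :=
  ∑ l ∈ Finset.range 4, w a b w0 w1 (n + l) • e l

/-- `qstar a b x = ∑_{l=0}^{3} (a^{ζ(l+1)}/(ab)^{⌊l/2⌋}) x^l e_l`; applied to `α`, `β`
it gives the quaternions `α*`, `β*`. -/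
noncomputable def qstar (a b x : ℝ) : Quaternion ℝ :=
  ∑ l ∈ Finset.range 4, (a ^ ((l + 1) % 2) / (a * b) ^ (l / 2) * x ^ l) • e l

/-- `qstarstar a b x = ∑_{l=0}^{3} (a^{ζ(l)}/(ab)^{⌊(l+1)/2⌋}) x^l e_l`; applied to `α`, `β`
it gives the quaternions `α**`, `β**`. -/
noncomputable def qstarstar (a b x : ℝ) : Quaternion ℝ :=
  ∑ l ∈ Finset.range 4, (a ^ (l % 2) / (a * b) ^ ((l + 1) / 2) * x ^ l) • e l

theorem w_even (a b w0 w1 : ℝ) (k : ℕ) :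
    w a b w0 w1 (2 * k + 2) = a * w a b w0 w1 (2 * k + 1) + w a b w0 w1 (2 * k) := by
  rw [w, if_pos (by grind)]

theorem w_odd (a b w0 w1 : ℝ) (k : ℕ) :
    w a b w0 w1 (2 * k + 3) = b * w a b w0 w1 (2 * k + 2) + w a b w0 w1 (2 * k + 1) := by
  rw [w, if_neg (by grind)]

theorem binet (a b w0 w1 α β A B : ℝ) (ha : a ≠ 0) (hb : b ≠ 0)
    (hs : α + β = a * b) (hp : α * β = -(a * b)) (hd : α - β ≠ 0)
    (hA : A = (α * w1 + b * w0) / (α - β))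
    (hB : B = (β * w1 + b * w0) / (α - β)) (k : ℕ) :
    w a b w0 w1 (2 * k) = (α + 1) ^ k * (A / α * a) - (β + 1) ^ k * (B / β * a) ∧
    w a b w0 w1 (2 * k + 1) = (α + 1) ^ k * A - (β + 1) ^ k * B := by
  have hab : a * b ≠ 0 := mul_ne_zero ha hb
  have hα0 : α ≠ 0 := by rintro rfl; simp_all
  have hβ0 : β ≠ 0 := by rintro rfl; simp_all
  have h2 : α ^ 2 = a * b * (α + 1) := by linear_combination α * hs - hp
  have h3 : β ^ 2 = a * b * (β + 1) := by linear_combination β * hs - hp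
  induction k with
  | zero =>
    have e1 : A * (α - β) = α * w1 + b * w0 := by rw [hA]; field_simp
    have e2 : B * (α - β) = β * w1 + b * w0 := by rw [hB]; field_simp
    constructor
    · simp only [w, mul_zero, pow_zero, one_mul]
      field_simp
      apply mul_right_cancel₀ hd
      linear_combination (-a * β) * e1 + a * α * e2 + w0 * (α - β) * hp
    · simp only [w, mul_zero, pow_zero, one_mul, zero_add]
      apply mul_right_cancel₀ hd
      linear_combination e2 - e1
  | succ k ih =>
    obtain ⟨i1, i2⟩ := ih
    have j1 : w a b w0 w1 (2 * (k + 1)) =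
        (α + 1) ^ (k + 1) * (A / α * a) - (β + 1) ^ (k + 1) * (B / β * a) := by
      rw [show 2 * (k + 1) = 2 * k + 2 by ring, w_even, i1, i2]
      field_simp
      ring
    refine ⟨j1, ?_⟩
    rw [show 2 * (k + 1) + 1 = 2 * k + 3 by ring, w_odd, i2,
      show 2 * k + 2 = 2 * (k + 1) by ring, j1]
    have e3 : b * (A / α * a) * (α + 1) = α * A := by
      field_simp
      linear_combination (-A) * h2
    have e4 : b * (B / β * a) * (β + 1) = β * B := by
      field_simp
      linear_combination (-B) * h3
    linear_combination (α + 1) ^ k * e3 - (β + 1) ^ k * e4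

theorem W_binet (a b w0 w1 α β A B : ℝ) (ha : a ≠ 0) (hb : b ≠ 0)
    (hs : α + β = a * b) (hp : α * β = -(a * b)) (hd : α - β ≠ 0)
    (hA : A = (α * w1 + b * w0) / (α - β))
    (hB : B = (β * w1 + b * w0) / (α - β)) (k : ℕ) :
    W a b w0 w1 (2 * k) = ((α + 1) ^ k * (A / α)) • qstar a b α
      - ((β + 1) ^ k * (B / β)) • qstar a b β := by
  have hab : a * b ≠ 0 := mul_ne_zero ha hb
  have hα0 : α ≠ 0 := by rintro rfl; simp_all
  have hβ0 : β ≠ 0 := by rintro rfl; simp_all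
  have h2 : α ^ 2 = a * b * (α + 1) := by linear_combination α * hs - hp
  have h3 : β ^ 2 = a * b * (β + 1) := by linear_combination β * hs - hp
  obtain ⟨i0, i1⟩ := binet a b w0 w1 α β A B ha hb hs hp hd hA hB k
  obtain ⟨i2, i3⟩ := binet a b w0 w1 α β A B ha hb hs hp hd hA hB (k + 1)
  rw [show 2 * (k + 1) = 2 * k + 2 by ring] at i2
  rw [show 2 * (k + 1) + 1 = 2 * k + 3 by ring] at i3
  have key : ∀ x : ℝ, x ^ 2 = a * b * (x + 1) → qstar a b x =
      a • e 0 + x • e 1 + (a * (x + 1)) • e 2 + (x * (x + 1)) • e 3 := by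
    intro x hx
    have c2 : a / (a * b) * x ^ 2 = a * (x + 1) := by rw [hx]; field_simp
    have c3 : 1 / (a * b) * x ^ 3 = x * (x + 1) := by
      rw [show x ^ 3 = x * x ^ 2 by ring, hx]; field_simp
    simp only [qstar, Finset.sum_range_succ, Finset.sum_range_zero]
    norm_num at c2 c3 ⊢
    rw [c2, c3]
  rw [key α h2, key β h3]
  simp only [W, Finset.sum_range_succ, Finset.sum_range_zero, add_zero, zero_add, i0, i1, i2, i3]
  have hA' : A = A / α * α := by field_simp
  have hB' : B = B / β * β := by field_simp
  generalize A / α = A' at *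
  generalize B / β = B' at *
  subst hA' hB'
  module

theorem alg (P Q : Quaternion ℝ) (p q u v : ℝ) (h : p * q = 1) (k : ℕ) :
    ((p ^ k * u) • P - (q ^ k * v) • Q) * ((p ^ (k + 2) * u) • P - (q ^ (k + 2) * v) • Q)
     - ((p ^ (k + 1) * u) • P - (q ^ (k + 1) * v) • Q) ^ 2
     = (u * v * (p - q)) • (q • (P * Q) - p • (Q * P)) := by
  have hk : p ^ k * q ^ k = 1 := by rw [← mul_pow, h, one_pow]
  have c1 : u * v * (p - q) * q = p ^ (k+1) * u * (q ^ (k+1) * v) - p ^ k * u * (q ^ (k+2) * v) := by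
    linear_combination (-u * v * (p - q) * q) * hk
  have c2 : u * v * (p - q) * p = q ^ k * v * (p ^ (k+2) * u) - q ^ (k+1) * v * (p ^ (k+1) * u) := by
    linear_combination (-u * v * (p - q) * p) * hk
  rw [smul_sub, smul_smul, smul_smul, c1, c2, sq]
  simp only [sub_mul, mul_sub, smul_mul_assoc, mul_smul_comm]
  module

/-- Cassini's like identity for the generalized bi-periodic Fibonacci quaternions. -/
theorem stmt6 (a b w0 w1 α β A B : ℝ)
    (ha : a ≠ 0) (hb : b ≠ 0) (hD : a ^ 2 * b ^ 2 + 4 * (a * b) > 0)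
    (hα : α = (a * b + Real.sqrt (a ^ 2 * b ^ 2 + 4 * (a * b))) / 2)
    (hβ : β = (a * b - Real.sqrt (a ^ 2 * b ^ 2 + 4 * (a * b))) / 2)
    (hA : A = (α * w1 + b * w0) / (α - β))
    (hB : B = (β * w1 + b * w0) / (α - β))
    (n : ℕ) (hn : 2 ≤ n) (hne : Even n) :
    W a b w0 w1 (n - 2) * W a b w0 w1 (n + 2) - W a b w0 w1 n ^ 2 =
      (A * B * (α ^ 2 - β ^ 2) / (α * β) ^ 3) •
        (β ^ 2 • (qstar a b α * qstar a b β) - α ^ 2 • (qstar a b β * qstar a b α)) := by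
  set s := Real.sqrt (a ^ 2 * b ^ 2 + 4 * (a * b)) with hsdef
  have hs0 : 0 < s := Real.sqrt_pos.mpr hD
  have hs2 : s ^ 2 = a ^ 2 * b ^ 2 + 4 * (a * b) := Real.sq_sqrt hD.le
  have hs : α + β = a * b := by rw [hα, hβ]; ring
  have hp : α * β = -(a * b) := by rw [hα, hβ]; linear_combination (-1 / 4) * hs2
  have hd : α - β ≠ 0 := by
    have : α - β = s := by rw [hα, hβ]; ring
    rw [this]; exact hs0.ne'
  obtain ⟨m, rfl⟩ := hne
  obtain ⟨k, rfl⟩ : ∃ k, m = k + 1 := ⟨m - 1, by omega⟩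
  rw [show k + 1 + (k + 1) - 2 = 2 * k by omega, show k + 1 + (k + 1) + 2 = 2 * (k + 2) by ring,
    show k + 1 + (k + 1) = 2 * (k + 1) by ring]
  have hab : a * b ≠ 0 := mul_ne_zero ha hb
  have hα0 : α ≠ 0 := by
    intro h; rw [h] at hp; apply hab; linarith
  have hβ0 : β ≠ 0 := by
    intro h; rw [h] at hp; apply hab; linarith
  have h2 : α ^ 2 = -(α * β) * (α + 1) := by linear_combination α * hs - hp + (α + 1) * hp
  have h3 : β ^ 2 = -(α * β) * (β + 1) := by linear_combination β * hs - hp + (β + 1) * hp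
  simp only [W_binet a b w0 w1 α β A B ha hb hs hp hd hA hB]
  rw [alg _ _ _ _ _ _ (by linear_combination hs + hp), smul_sub, smul_sub, smul_smul, smul_smul,
    smul_smul, smul_smul]
  rw [h2, h3]
  congr 2
  · field_simp
    ring
  · field_simp
    ring
end

section
/- For every integer n ≥ 1, W_{2(n-1)}·W_{2(n+1)} − W_{2n}² = W_0·W_4 − W_2²; that is, this quaternion expression is independent of n. -/
theorem w_step (a b w0 w1 : ℝ) (m : ℕ) :
    w a b w0 w1 (m + 4) = (a * b + 2) * w a b w0 w1 (m + 2) - w a b w0 w1 m := by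
  have h2 : w a b w0 w1 (m + 2) = (if Even (m + 2) then a else b) * w a b w0 w1 (m + 1)
      + w a b w0 w1 m := by rw [w]
  have h3 : w a b w0 w1 (m + 3) = (if Even (m + 3) then a else b) * w a b w0 w1 (m + 2)
      + w a b w0 w1 (m + 1) := by rw [w]
  have h4 : w a b w0 w1 (m + 4) = (if Even (m + 4) then a else b) * w a b w0 w1 (m + 3)
      + w a b w0 w1 (m + 2) := by rw [w]
  rcases Nat.even_or_odd m with h | h
  · have e2 : Even (m + 2) := by grind
    have e3 : ¬ Even (m + 3) := by grind
    have e4 : Even (m + 4) := by grind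
    rw [if_pos e2] at h2
    rw [if_neg e3] at h3
    rw [if_pos e4] at h4
    rw [h4, h3]
    linear_combination -h2
  · have e2 : ¬ Even (m + 2) := by grind
    have e3 : Even (m + 3) := by grind
    have e4 : ¬ Even (m + 4) := by grind
    rw [if_neg e2] at h2
    rw [if_pos e3] at h3
    rw [if_neg e4] at h4
    rw [h4, h3]
    linear_combination -h2

theorem W_step (a b w0 w1 : ℝ) (m : ℕ) :
    W a b w0 w1 (m + 4) = (a * b + 2) • W a b w0 w1 (m + 2) - W a b w0 w1 m := by
  unfold W
  rw [Finset.smul_sum, ← Finset.sum_sub_distrib]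
  refine Finset.sum_congr rfl fun l _ => ?_
  rw [smul_smul, ← sub_smul, show m + 4 + l = m + l + 4 by ring, w_step,
    show m + 2 + l = m + l + 2 by ring]

theorem W_inv (a b w0 w1 : ℝ) (n : ℕ) :
    W a b w0 w1 (2 * n) * W a b w0 w1 (2 * n + 4) - W a b w0 w1 (2 * n + 2) ^ 2 =
      W a b w0 w1 0 * W a b w0 w1 4 - W a b w0 w1 2 ^ 2 := by
  induction n with
  | zero => rfl
  | succ k ih =>
    rw [← ih]
    have h6 := W_step a b w0 w1 (2 * k + 2)
    have h4 := W_step a b w0 w1 (2 * k)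
    have e1 : 2 * (k + 1) = 2 * k + 2 := by ring
    rw [e1, h6]
    simp only [show 2 * k + 2 + 2 = 2 * k + 4 by ring]
    generalize W a b w0 w1 (2 * k + 4) = Z at *
    generalize W a b w0 w1 (2 * k + 2) = Y at *
    generalize W a b w0 w1 (2 * k) = X at *
    have hX : X = (a * b + 2) • Y - Z := by rw [h4]; abel
    rw [hX, sq, sq, mul_sub, sub_mul, mul_smul_comm, smul_mul_assoc]
    abel

/-- `W_{2(n-1)} W_{2(n+1)} - W_{2n}²` is independent of `n`. -/
theorem stmt9 (a b w0 w1 : ℝ) (ha : a ≠ 0) (hb : b ≠ 0) (n : ℕ) (hn : 1 ≤ n) :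
    W a b w0 w1 (2 * (n - 1)) * W a b w0 w1 (2 * (n + 1)) - W a b w0 w1 (2 * n) ^ 2 =
      W a b w0 w1 0 * W a b w0 w1 4 - W a b w0 w1 2 ^ 2 := by
  obtain ⟨k, rfl⟩ : ∃ k, n = k + 1 := ⟨n - 1, by omega⟩
  exact W_inv a b w0 w1 k
end

section
/- (Cassini's like identity for bi-periodic Fibonacci quaternions) For every integer n ≥ 1, Q_{2(n-1)}·Q_{2(n+1)} − Q_{2n}² = Q_0·Q_4 − Q_2². -/
/-- The bi-periodic Fibonacci quaternion `Q_n`, i.e. `W_n` with `w_0 = 0`, `w_1 = 1`. -/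
noncomputable def Q (a b : ℝ) (n : ℕ) : Quaternion ℝ :=
  W a b 0 1 n

theorem w_four (a b w0 w1 : ℝ) (n : ℕ) :
    w a b w0 w1 (n + 4) = (a * b + 2) * w a b w0 w1 (n + 2) - w a b w0 w1 n := by
  have h4 : w a b w0 w1 (n + 4) =
    (if Even (n + 2 + 2) then a else b) * w a b w0 w1 (n + 3) + w a b w0 w1 (n + 2) := by
    rw [w]
  have h3 : w a b w0 w1 (n + 3) =
    (if Even (n + 1 + 2) then a else b) * w a b w0 w1 (n + 2) + w a b w0 w1 (n + 1) := by
    rw [w]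
  have h2 : w a b w0 w1 (n + 2) =
    (if Even (n + 2) then a else b) * w a b w0 w1 (n + 1) + w a b w0 w1 n := by
    rw [w]
  rcases Nat.even_or_odd n with h | h
  · have e4 : Even (n + 2 + 2) := by grind
    have e3 : ¬ Even (n + 1 + 2) := by grind
    have e2 : Even (n + 2) := by grind
    rw [if_pos e4] at h4
    rw [if_neg e3] at h3
    rw [if_pos e2] at h2
    linear_combination h4 + a * h3 - h2
  · have e4 : ¬ Even (n + 2 + 2) := by grind
    have e3 : Even (n + 1 + 2) := by grind
    have e2 : ¬ Even (n + 2) := by grind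
    rw [if_neg e4] at h4
    rw [if_pos e3] at h3
    rw [if_neg e2] at h2
    linear_combination h4 + b * h3 - h2

theorem Q_four (a b : ℝ) (n : ℕ) :
    Q a b (n + 4) = (a * b + 2) • Q a b (n + 2) - Q a b n := by
  unfold Q W
  rw [Finset.smul_sum, ← Finset.sum_sub_distrib]
  refine Finset.sum_congr rfl fun l _ => ?_
  rw [smul_smul, ← sub_smul, show n + 4 + l = n + l + 4 by ring,
    show n + 2 + l = n + l + 2 by ring, w_four]

theorem cassini_aux (a b : ℝ) (m : ℕ) :
    Q a b (2 * m) * Q a b (2 * m + 4) - Q a b (2 * m + 2) ^ 2 =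
      Q a b 0 * Q a b 4 - Q a b 2 ^ 2 := by
  induction m with
  | zero => rfl
  | succ k ih =>
    rw [← ih]
    have h1 := Q_four a b (2 * k)
    have h2 := Q_four a b (2 * k + 2)
    rw [show 2 * (k + 1) + 4 = 2 * k + 2 + 4 by ring, show 2 * (k + 1) + 2 = 2 * k + 4 by ring,
      show 2 * (k + 1) = 2 * k + 2 by ring, h2, show 2 * k + 2 + 2 = 2 * k + 4 by ring]
    have h3 : Q a b (2 * k) = (a * b + 2) • Q a b (2 * k + 2) - Q a b (2 * k + 4) := by
      rw [h1]; abel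
    rw [h3, mul_sub, sub_mul, mul_smul_comm, smul_mul_assoc, sq, sq]
    abel

/-- Cassini's like identity for the bi-periodic Fibonacci quaternions. -/
theorem stmt10 (a b : ℝ) (ha : a ≠ 0) (hb : b ≠ 0) (n : ℕ) (hn : 1 ≤ n) :
    Q a b (2 * (n - 1)) * Q a b (2 * (n + 1)) - Q a b (2 * n) ^ 2 =
      Q a b 0 * Q a b 4 - Q a b 2 ^ 2 := by
  obtain ⟨m, rfl⟩ : ∃ m, n = m + 1 := ⟨n - 1, by omega⟩
  exact cassini_aux a b m
end
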